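/- arXiv:2207.14113 — 2 statements merged into one kernel-verified Lean document; each statement's English description precedes it below -/
import Mathlib

section
/- Let q be a power of 2 and let F be a field of characteristic 2 containing F_q. Let L be a q-linearized polynomial of q-degree n in F[x] with distinct roots, and suppose (q, n) ≠ (2, 2). Then the Galois group of L over F, considered as a permutation group on the q^n − 1 roots of L(x)/x, is contained in the alternating group A_{q^n − 1}; that is, every element of the Galois group induces an even permutation of the roots of L(x)/x. -/
/-!
Write `q = #k`. The roots of `L` form an `n`-dimensional `k`-vector space on which the Galois group
acts `k`-linearly, so it suffices that the sign of the permutation of `kⁿ` induced by an element of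
`GLₙ(k)` is always `1`; fixing the zero vector, such a permutation has the same sign on the nonzero
vectors. In fact every homomorphism from `GLₙ(k)` to a commutative group of order prime to `q - 1`
is trivial when `(q, n) ≠ (2, 2)`. Indeed `GLₙ(k)` is generated by transvections and diagonal
matrices. A transvection is a commutator of two transvections as soon as there is a third index, and
of a diagonal matrix and a transvection as soon as `k` has an element other than `0` and `1`; and
diagonal matrices have order dividing `q - 1`.
-/

open Matrix Polynomial

lemma exists_ne_ne_of_natCard_ne_two {α : Type*} {x y : α} (hxy : x ≠ y)
    (hα : Nat.card α ≠ 2) : ∃ z, z ≠ x ∧ z ≠ y := by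
  by_contra! h
  exact hα <| (Nat.card_eq_two_iff' x).2 ⟨y, hxy.symm, h⟩

section MapTransvection

variable {ι R A : Type*} [Fintype ι] [DecidableEq ι] [CommRing R] [CommGroup A]
  (φ : GL ι R →* A)

lemma transvection_mul_transvection_of_ne {i j k : ι} (hij : i ≠ j) (hik : i ≠ k) (hkj : k ≠ j)
    (b c : R) :
    SpecialLinearGroup.transvection hik b * SpecialLinearGroup.transvection hkj c =
      SpecialLinearGroup.transvection hij (b * c) *
        (SpecialLinearGroup.transvection hkj c * SpecialLinearGroup.transvection hik b) := by
  refine Subtype.ext ?_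
  simp only [Matrix.SpecialLinearGroup.coe_mul, SpecialLinearGroup.transvection_coe, mul_add,
    add_mul, mul_one, one_mul, single_mul_single_same, single_mul_single_of_ne _ _ _ _ hij.symm,
    single_mul_single_of_ne _ _ _ _ hkj.symm, add_zero]
  abel

lemma map_transvection_eq_one_of_ne_ne {i j k : ι} (hij : i ≠ j) (hki : k ≠ i) (hkj : k ≠ j)
    (c : R) : φ (SpecialLinearGroup.transvection hij c) = 1 := by
  have h := congrArg (fun g : SpecialLinearGroup ι R ↦ φ g)
    (transvection_mul_transvection_of_ne hij hki.symm hkj 1 c)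
  simp only [one_mul, map_mul] at h
  rwa [mul_comm (φ (SpecialLinearGroup.transvection hkj c)), right_eq_mul] at h

/-- The diagonal matrix `diag(d)` with invertible entries, as an element of `GL ι R`. -/
def diagonalGL : (ι → Rˣ) →* GL ι R :=
  (Units.map (diagonalRingHom ι R : (ι → R) →* Matrix ι ι R)).comp
    MulEquiv.piUnits.symm.toMonoidHom

lemma coe_diagonalGL (d : ι → Rˣ) : (diagonalGL d : Matrix ι ι R) = diagonal fun i ↦ (d i : R) :=
  rfl

lemma diagonalGL_mul_transvection {i j : ι} (hij : i ≠ j) (d : ι → Rˣ) (b c : R)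
    (h : d i * b = c * d j) :
    diagonalGL d * SpecialLinearGroup.transvection hij b =
      SpecialLinearGroup.transvection hij c * diagonalGL d := by
  apply Units.ext
  have hsingle : diagonal (fun l ↦ (d l : R)) * single i j b =
      single i j c * diagonal fun l ↦ (d l : R) := by
    ext k l
    rw [diagonal_mul, mul_diagonal, single_apply, single_apply]
    split_ifs with hkl
    · rw [← hkl.1, ← hkl.2, h]
    · rw [mul_zero, zero_mul]
  simp [coe_diagonalGL, SpecialLinearGroup.transvection_coe, mul_add, add_mul, hsingle]

lemma map_transvection_eq_one_of_isUnit_sub_one {i j : ι} (hij : i ≠ j) (u : Rˣ)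
    (hu : IsUnit (u - 1 : R)) (c : R) : φ (SpecialLinearGroup.transvection hij c) = 1 := by
  obtain ⟨v, hv⟩ := hu
  set b : R := ↑v⁻¹ * c
  have hc : u * b = c + b := by
    have : (v : R) * b = c := by simp [b]
    rw [hv] at this
    linear_combination this
  have h := congrArg φ (diagonalGL_mul_transvection hij (Function.update 1 i u) b (c + b)
    (by simp [hij.symm, hc]))
  rwa [SpecialLinearGroup.transvection_add, map_mul, map_mul, map_mul, map_mul,
    mul_comm, mul_left_inj, right_eq_mul] at h

end MapTransvection

section Field

variable {ι k A : Type*} [Fintype ι] [DecidableEq ι] [Field k] [CommGroup A]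

lemma map_transvection_eq_one (φ : GL ι k →* A) (h : ¬(Nat.card k = 2 ∧ Nat.card ι = 2))
    {i j : ι} (hij : i ≠ j) (c : k) : φ (SpecialLinearGroup.transvection hij c) = 1 := by
  rcases not_and_or.1 h with hk | hι
  · obtain ⟨u, hu0, hu1⟩ := exists_ne_ne_of_natCard_ne_two (zero_ne_one (α := k)) hk
    exact map_transvection_eq_one_of_isUnit_sub_one φ hij (Units.mk0 u hu0)
      (sub_ne_zero.2 hu1).isUnit c
  · obtain ⟨l, hli, hlj⟩ := exists_ne_ne_of_natCard_ne_two hij hι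
    exact map_transvection_eq_one_of_ne_ne φ hij hli hlj c

lemma map_diagonalGL_eq_one [Finite k] (φ : GL ι k →* A)
    (hA : (Nat.card k - 1).Coprime (Nat.card A)) (d : ι → kˣ) : φ (diagonalGL d) = 1 := by
  have hd : d ^ (Nat.card k - 1) = 1 := by
    rw [← Nat.card_units]
    exact funext fun i ↦ pow_card_eq_one'
  have h : φ (diagonalGL d) ^ (Nat.card k - 1).gcd (Nat.card A) = 1 :=
    pow_gcd_eq_one.2 ⟨by rw [← map_pow, ← map_pow, hd, map_one, map_one], pow_card_eq_one'⟩
  rwa [hA, pow_one] at h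

theorem monoidHom_GL_eq_one [Finite k] (φ : GL ι k →* A)
    (hA : (Nat.card k - 1).Coprime (Nat.card A)) (h : ¬(Nat.card k = 2 ∧ Nat.card ι = 2)) :
    φ = 1 := by
  suffices key : ∀ M : Matrix ι ι k, M.det ≠ 0 → ∀ g : GL ι k, (g : Matrix ι ι k) = M → φ g = 1 from
    MonoidHom.ext fun g ↦ key g g.det_ne_zero g rfl
  intro M hM
  refine diagonal_transvection_induction_of_det_ne_zero
    (fun M ↦ ∀ g : GL ι k, (g : Matrix ι ι k) = M → φ g = 1) M hM ?_ ?_ ?_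
  · intro D hD g hg
    rw [det_diagonal, Finset.prod_ne_zero_iff] at hD
    have hgD : g = diagonalGL fun i ↦ Units.mk0 (D i) (hD i (Finset.mem_univ i)) :=
      Units.ext hg
    rw [hgD, map_diagonalGL_eq_one φ hA]
  · intro t g hg
    have hgt : g = t.toSpecialLinearGroup := Units.ext hg
    exact hgt ▸ map_transvection_eq_one φ h t.hij t.c
  · intro M N hM hN ihM ihN g hg
    have hgMN : g = .mkOfDetNeZero M hM * .mkOfDetNeZero N hN := Units.ext hg
    rw [hgMN, map_mul, ihM _ rfl, ihN _ rfl, one_mul]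

end Field

section LinearEquiv

variable {k V : Type*} [Field k] [Finite k] [AddCommGroup V] [Module k V]

theorem monoidHom_linearEquiv_eq_one [Module.Finite k V] {A : Type*} [CommGroup A]
    (φ : (V ≃ₗ[k] V) →* A) (hA : (Nat.card k - 1).Coprime (Nat.card A))
    (h : ¬(Nat.card k = 2 ∧ Module.finrank k V = 2)) : φ = 1 := by
  let e : GL (Fin (Module.finrank k V)) k ≃* (V ≃ₗ[k] V) :=
    (GeneralLinearGroup.toLin' (Module.finBasis k V)).trans
      (LinearMap.GeneralLinearGroup.generalLinearEquiv k V)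
  have hφe : φ.comp e.toMonoidHom = 1 := monoidHom_GL_eq_one _ hA (by rwa [Nat.card_fin])
  exact (MonoidHom.cancel_right e.surjective).1 (hφe.trans (MonoidHom.one_comp _).symm)

theorem sign_linearEquiv_eq_one [Fintype V] [DecidableEq V] (hk : Even (Nat.card k))
    (h : ¬(Nat.card k = 2 ∧ Module.finrank k V = 2)) (f : V ≃ₗ[k] V) :
    Equiv.Perm.sign f.toEquiv = 1 := by
  have hcop : (Nat.card k - 1).Coprime (Nat.card ℤˣ) := by
    rw [Nat.card_eq_fintype_card (α := ℤˣ), Fintype.card_units_int, Nat.coprime_two_right]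
    exact Nat.Even.sub_odd Nat.card_pos hk odd_one
  exact DFunLike.congr_fun (monoidHom_linearEquiv_eq_one
    (Equiv.Perm.sign.comp (MulAction.toPermHom (V ≃ₗ[k] V) V)) hcop h) f

theorem sign_perm_nonzero_eq_one {W : Submodule k V} [Finite W] (hk : Even (Nat.card k))
    (h : ¬(Nat.card k = 2 ∧ Module.finrank k W = 2)) {s : Set V} [Fintype s] [DecidableEq s]
    (hs : s = (W : Set V) \ {0}) (f : V →ₗ[k] V) (π : Equiv.Perm s) (hπ : ∀ x, (π x : V) = f x) :
    Equiv.Perm.sign π = 1 := by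
  classical
  have := Fintype.ofFinite W
  have hmem {x : V} : x ∈ s ↔ x ∈ W ∧ x ≠ 0 := by simp [hs]
  have hf {x : V} (hx : x ∈ s) : f x ∈ s := hπ ⟨x, hx⟩ ▸ (π ⟨x, hx⟩).2
  have hfW (x : V) (hx : x ∈ W) : f x ∈ W := by
    by_cases hx0 : x = 0
    · simp [hx0]
    · exact (hmem.1 (hf (hmem.2 ⟨hx, hx0⟩))).1
  have hinj : Function.Injective (f.restrict hfW) := by
    refine (injective_iff_map_eq_zero _).2 fun x hx ↦ ?_
    by_contra hx0
    exact (hmem.1 (hf (hmem.2 ⟨x.2, by simpa using hx0⟩))).2 (congrArg Subtype.val hx)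
  let g : W ≃ₗ[k] W := .ofInjectiveEndo (f.restrict hfW) hinj
  rw [← sign_linearEquiv_eq_one hk h g]
  refine Equiv.Perm.sign_bij (fun x _ ↦ ⟨x, (hmem.1 x.2).1⟩) ?_ ?_ ?_
  · exact fun x _ _ ↦ Subtype.ext (hπ x)
  · exact fun x y _ _ hxy ↦ Subtype.ext (congrArg (fun w : W ↦ (w : V)) hxy)
  · intro y hy
    have hy0 : (y : V) ≠ 0 := fun hy0 ↦ hy <| by
      rw [Submodule.coe_eq_zero.1 hy0]
      exact map_zero g
    refine ⟨⟨y, hmem.2 ⟨y.2, hy0⟩⟩, fun hfix ↦ hy <| Subtype.ext ?_, rfl⟩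
    exact (hπ _).symm.trans (congrArg Subtype.val hfix)

end LinearEquiv

section LinearizedPolynomial

variable {R : Type*} [CommSemiring R]

/-- The `q`-linearized polynomial `a₀ x + a₁ x^q + ⋯ + aₙ x^(qⁿ)`. -/
noncomputable def linearizedPoly (q : ℕ) (a : ℕ → R) (n : ℕ) : R[X] :=
  ∑ i ∈ Finset.range (n + 1), C (a i) * X ^ q ^ i

/-- The quotient `L(x) / x` of the `q`-linearized polynomial `L` with coefficients `a₀, …, aₙ`.
The truncated subtraction in the exponents is harmless for `q ≠ 0`. -/
noncomputable def linearizedPolyDivX (q : ℕ) (a : ℕ → R) (n : ℕ) : R[X] :=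
  ∑ i ∈ Finset.range (n + 1), C (a i) * X ^ (q ^ i - 1)

lemma X_mul_linearizedPolyDivX {q : ℕ} (hq : q ≠ 0) (a : ℕ → R) (n : ℕ) :
    X * linearizedPolyDivX q a n = linearizedPoly q a n := by
  rw [linearizedPolyDivX, Finset.mul_sum]
  refine Finset.sum_congr rfl fun i _ ↦ ?_
  rw [mul_left_comm, mul_pow_sub_one (pow_ne_zero i hq)]

lemma natDegree_linearizedPoly {q : ℕ} (hq : 1 < q) {a : ℕ → R} {n : ℕ} (han : a n ≠ 0) :
    (linearizedPoly q a n).natDegree = q ^ n := by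
  rw [linearizedPoly, Finset.sum_range_succ, natDegree_add_eq_right_of_degree_lt,
    natDegree_C_mul_X_pow _ _ han]
  rw [degree_C_mul_X_pow _ han, degree_lt_iff_coeff_zero]
  intro m hm
  refine (finsetSum_coeff _ _ _).trans (Finset.sum_eq_zero fun i hi ↦ ?_)
  have him : q ^ i < m := (Nat.pow_lt_pow_right hq (Finset.mem_range.1 hi)).trans_le hm
  rw [coeff_C_mul_X_pow, if_neg him.ne']

variable (k E : Type*) {F : Type*} [Field k] [Fintype k] [Field F] [Algebra k F] [Field E]
  [Algebra F E] [Algebra k E] [IsScalarTower k F E]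

/-- The space of roots in `E` of the `q`-linearized polynomial with coefficients `a₀, …, aₙ`, where
`q = #k`, realized as the kernel of the `k`-linear map `∑ i, aᵢ • Frobⁱ`. -/
def linearizedRootSpace (a : ℕ → F) (n : ℕ) : Submodule k E :=
  LinearMap.ker (∑ i ∈ Finset.range (n + 1),
    a i • (FiniteField.frobeniusAlgHom k E ^ i).toLinearMap)

variable {k E} {a : ℕ → F} {n : ℕ}

lemma mem_linearizedRootSpace {x : E} :
    x ∈ linearizedRootSpace k E a n ↔ aeval x (linearizedPoly (Fintype.card k) a n) = 0 := by
  simp [linearizedRootSpace, linearizedPoly, Algebra.smul_def, FiniteField.coe_frobeniusAlgHom,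
    pow_iterate]

lemma coe_linearizedRootSpace (hL : linearizedPoly (Fintype.card k) a n ≠ 0) :
    (linearizedRootSpace k E a n : Set E) = (linearizedPoly (Fintype.card k) a n).rootSet E :=
  Set.ext fun _ ↦ mem_linearizedRootSpace.trans (mem_rootSet_of_ne hL).symm

lemma finite_linearizedRootSpace (hL : linearizedPoly (Fintype.card k) a n ≠ 0) :
    Finite (linearizedRootSpace k E a n) := by
  have h := rootSet_finite (linearizedPoly (Fintype.card k) a n) E
  rw [← coe_linearizedRootSpace hL] at h
  exact h.to_subtype

lemma finrank_linearizedRootSpace (han : a n ≠ 0)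
    (hsep : (linearizedPoly (Fintype.card k) a n).Separable)
    (hsplits : ((linearizedPoly (Fintype.card k) a n).map (algebraMap F E)).Splits) :
    Module.finrank k (linearizedRootSpace k E a n) = n := by
  have := finite_linearizedRootSpace (E := E) hsep.ne_zero
  have hk : 1 < Fintype.card k := Fintype.one_lt_card
  have hcard : Nat.card (linearizedRootSpace k E a n) = Fintype.card k ^ n := by
    rw [← SetLike.coe_sort_coe, coe_linearizedRootSpace hsep.ne_zero, Nat.card_eq_fintype_card,
      card_rootSet_eq_natDegree hsep hsplits, natDegree_linearizedPoly hk han]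
  rw [Module.natCard_eq_pow_finrank (K := k), Nat.card_eq_fintype_card] at hcard
  exact Nat.pow_right_injective hk hcard

lemma rootSet_linearizedPolyDivX (hsep : (linearizedPoly (Fintype.card k) a n).Separable) :
    (linearizedPolyDivX (Fintype.card k) a n).rootSet E =
      (linearizedRootSpace k E a n : Set E) \ {0} := by
  have hXG := X_mul_linearizedPolyDivX (Fintype.card_ne_zero (α := k)) a n
  rw [← hXG] at hsep
  have hG0 : aeval (0 : E) (linearizedPolyDivX (Fintype.card k) a n) ≠ 0 := by
    have h := hsep.isCoprime.map (aeval (R := F) (0 : E)).toRingHom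
    simp only [AlgHom.toRingHom_eq_coe, RingHom.coe_coe, aeval_X] at h
    exact (isCoprime_zero_left.1 h).ne_zero
  ext x
  rw [mem_rootSet_of_ne (right_ne_zero_of_mul hsep.ne_zero), Set.mem_sdiff, SetLike.mem_coe,
    mem_linearizedRootSpace, ← hXG, map_mul, aeval_X, mul_eq_zero, Set.mem_singleton_iff]
  exact ⟨fun hx ↦ ⟨.inr hx, by rintro rfl; exact hG0 hx⟩, fun hx ↦ hx.1.resolve_left hx.2⟩

end LinearizedPolynomial

/-- Let `q` be a power of `2` and `F` a field of characteristic `2`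
containing `F_q`. Let `L` be a `q`-linearized polynomial of `q`-degree `n` over `F` with
distinct roots, and suppose `(q, n) ≠ (2, 2)`. Then every element of the Galois group of
`L` over `F` induces an even permutation of the `qⁿ − 1` roots of `L(x)/x`. -/
theorem galois_group_even_on_roots_char_two
    (q n : ℕ) (Fq : Type) [Field Fq] [Fintype Fq] (hq : Fintype.card Fq = q)
    (h2 : ∃ e : ℕ, 0 < e ∧ q = 2 ^ e)
    (F : Type) [Field F] [Algebra Fq F] [CharP F 2]
    (a : ℕ → F) (han : a n ≠ 0)
    (L G : Polynomial F)
    (hL : L = ∑ i ∈ Finset.range (n + 1), Polynomial.C (a i) * Polynomial.X ^ q ^ i)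
    (hG : G = ∑ i ∈ Finset.range (n + 1), Polynomial.C (a i) * Polynomial.X ^ (q ^ i - 1))
    (hsep : L.Separable)
    (hexc : ¬(q = 2 ∧ n = 2)) :
    ∀ σ : L.Gal,
      haveI : DecidableEq (G.rootSet L.SplittingField) := Classical.decEq _
      ∃ π : Equiv.Perm (G.rootSet L.SplittingField),
        (∀ x : G.rootSet L.SplittingField, (π x : L.SplittingField) = σ (x : L.SplittingField)) ∧
        Equiv.Perm.sign π = 1 := by
  intro σ
  subst hq
  obtain ⟨e, he, hcard⟩ := h2
  have heven : Even (Nat.card Fq) := by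
    rw [Nat.card_eq_fintype_card, hcard]
    exact even_two.pow_of_ne_zero he.ne'
  change L = linearizedPoly (Fintype.card Fq) a n at hL
  change G = linearizedPolyDivX (Fintype.card Fq) a n at hG
  subst hL hG
  let E := (linearizedPoly (Fintype.card Fq) a n).SplittingField
  have : Finite (linearizedRootSpace Fq E a n) := finite_linearizedRootSpace hsep.ne_zero
  have hdim : Module.finrank Fq (linearizedRootSpace Fq E a n) = n :=
    finrank_linearizedRootSpace han hsep (SplittingField.splits _)
  let R := (linearizedPolyDivX (Fintype.card Fq) a n).rootSet E
  let : DecidableEq R := Classical.decEq R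
  let π : Equiv.Perm R := MulAction.toPerm (α := E ≃ₐ[F] E) σ
  have hπ (x : R) : (π x : E) = σ x := rfl
  exact ⟨π, hπ, sign_perm_nonzero_eq_one heven (by rwa [hdim, Nat.card_eq_fintype_card])
    (rootSet_linearizedPolyDivX hsep) (σ.toLinearMap.restrictScalars Fq) π hπ⟩
end

section
/- Let q be an odd prime power, let n ≥ 1, and let k > n be an integer. Let L(x) ∈ F_q[x] be a monic q-linearized polynomial of q-degree n. If for every nonzero α ∈ F_{q^k} the element L(α)/α is either zero or a square in F_{q^k}, then L(x) = x^{q^n}. Similarly, if for every nonzero α ∈ F_{q^k} the element −L(α)/α is either zero or a square in F_{q^k}, then L(x) = x^{q^n}. -/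
/-!
Write `k = [E : K]`, `q = |K| = 2r + 1` and `m = (|E| - 1) / 2 = r(1 + q + ⋯ + q^(k-1))`. The
hypothesis says that `L ^ (m + 1) = x ^ m L` as functions on `E`. Suppose that the two highest
terms of `L` are `b x^(q^n)` and `d x^(q^i)`, and let `e = (|E| - 1) - (r q^n + q^i)`. Then the sum
of `x ^ e * L ^ (r + 1)` over `E` can be evaluated in two ways.

* As a polynomial sum it picks out the coefficient of `x^(|E|-1)`, so it is `-(r + 1) b^r d`.
* Since `e ≥ m`, it is the sum of `x ^ (e - m) * L ^ (m + r + 1)`. The base-`q` digits of the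
  exponents, after trading `2r + 1` copies of `1` for one `q` in `m + r + 1`, write this function as
  a product of `2r(k - 1)` functions that are linear over `K`. In coordinates over `K` it is a
  polynomial of degree less than `(q - 1)k`, so it sums to zero, as in the proof of the
  Chevalley–Warning theorem.

Finally `r + 1` is invertible in `E` because `2(r + 1) = q + 1 = 1` there, and hence `d = 0`.
-/

open Polynomial Module

lemma coeff_pow_succ_of_natDegree_sub_le {R : Type*} [CommRing R] {P : R[X]} {c : R} {D d : ℕ}
    (hdD : d < D) (hP : (P - C c * X ^ D).natDegree ≤ d) (r : ℕ) :
    (P ^ (r + 1)).coeff (r * D + d) = (r + 1) * c ^ r * P.coeff d := by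
  set Q := P - C c * X ^ D
  have hPQ : P = C c * X ^ D + Q := (add_sub_cancel _ _).symm
  have hPD : P.natDegree ≤ D :=
    hPQ ▸ natDegree_add_le_of_degree_le (natDegree_C_mul_X_pow_le c D) (hP.trans hdD.le)
  have hcoeffD : P.coeff D = c := by
    simp [hPQ, coeff_eq_zero_of_natDegree_lt (hP.trans_lt hdD)]
  have hcoeffd : P.coeff d = Q.coeff d := by simp [hPQ, coeff_X_pow, hdD.ne]
  induction r with
  | zero => simp
  | succ r ih =>
    have hlead : (P ^ (r + 1) * (C c * X ^ D)).coeff ((r + 1) * D + d) =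
        (r + 1) * c ^ r * P.coeff d * c := by
      rw [← mul_assoc, show (r + 1) * D + d = r * D + d + D by ring, coeff_mul_X_pow, coeff_mul_C,
        ih]
    have htail : (P ^ (r + 1) * Q).coeff ((r + 1) * D + d) = c ^ (r + 1) * P.coeff d := by
      rw [coeff_mul_add_eq_of_natDegree_le (natDegree_pow_le_of_le _ hPD) hP,
        coeff_pow_of_natDegree_le hPD, hcoeffD, hcoeffd]
    calc (P ^ (r + 1 + 1)).coeff ((r + 1) * D + d)
      _ = (P ^ (r + 1) * (C c * X ^ D) + P ^ (r + 1) * Q).coeff ((r + 1) * D + d) := by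
        rw [← mul_add, ← hPQ, ← pow_succ]
      _ = ((r + 1 : ℕ) + 1) * c ^ (r + 1) * P.coeff d := by
        rw [coeff_add, hlead, htail]
        push_cast
        ring

section LinearizedPolynomial

variable {R : Type*}

/-- The `q`-linearized polynomial `a₀ X + a₁ X^q + ⋯ + aₙ X^(q^n)`. Only the terms `a 0, …, a n` of
the sequence `a` matter, and having `q`-degree `n` amounts to `a n ≠ 0`. -/
noncomputable def linearizedPolynomial [Semiring R] (q n : ℕ) (a : ℕ → R) : R[X] :=
  ∑ i ∈ Finset.range (n + 1), C (a i) * X ^ q ^ i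

variable {q n i : ℕ} {a : ℕ → R}

lemma natDegree_linearizedPolynomial_le [Semiring R] (hq : 0 < q) :
    (linearizedPolynomial q n a).natDegree ≤ q ^ n :=
  natDegree_sum_le_of_forall_le _ _ fun _ hj ↦ (natDegree_C_mul_X_pow_le _ _).trans <|
    Nat.pow_le_pow_right hq (Nat.lt_succ_iff.1 (Finset.mem_range.1 hj))

lemma coeff_linearizedPolynomial [Semiring R] (hq : 1 < q) (hi : i ≤ n) :
    (linearizedPolynomial q n a).coeff (q ^ i) = a i := by
  simp [linearizedPolynomial, coeff_X_pow, Nat.pow_right_inj hq, hi]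

lemma linearizedPolynomial_sub_leading [Ring R] :
    linearizedPolynomial q n a - C (a n) * X ^ q ^ n =
      ∑ j ∈ Finset.range n, C (a j) * X ^ q ^ j := by
  rw [linearizedPolynomial, Finset.sum_range_succ, add_sub_cancel_right]

lemma natDegree_linearizedPolynomial_sub_leading_le [Ring R] (hq : 0 < q)
    (ha : ∀ j, i < j → j < n → a j = 0) :
    (linearizedPolynomial q n a - C (a n) * X ^ q ^ n).natDegree ≤ q ^ i := by
  rw [linearizedPolynomial_sub_leading]
  refine natDegree_sum_le_of_forall_le _ _ fun j hj ↦ ?_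
  rcases lt_or_ge i j with hij | hji
  · simp [ha j hij (Finset.mem_range.1 hj)]
  · exact (natDegree_C_mul_X_pow_le _ _).trans (Nat.pow_le_pow_right hq hji)

lemma linearizedPolynomial_eq_monomial [Semiring R] (ha : ∀ i < n, a i = 0) :
    linearizedPolynomial q n a = C (a n) * X ^ q ^ n := by
  have hlow : ∑ i ∈ Finset.range n, C (a i) * X ^ q ^ i = 0 :=
    Finset.sum_eq_zero fun i hi ↦ by simp [ha i (Finset.mem_range.1 hi)]
  rw [linearizedPolynomial, Finset.sum_range_succ, hlow, zero_add]

lemma eval_linearizedPolynomial_mul_algebraMap [CommSemiring R] {A : Type*} [Semiring A]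
    [Algebra R A] (c x : A) :
    (linearizedPolynomial q n fun i ↦ c * algebraMap R A (a i)).eval x =
      c * aeval x (linearizedPolynomial q n a) := by
  simp [linearizedPolynomial, eval_finsetSum, Finset.mul_sum, mul_assoc]

end LinearizedPolynomial

section FiniteField

variable {E : Type*} [Field E] [Fintype E]

lemma sum_pow_eq_ite_of_ne_zero {e : ℕ} (he : e ≠ 0) :
    ∑ x : E, x ^ e = if Fintype.card E - 1 ∣ e then -1 else 0 := by
  classical
  rw [← FiniteField.sum_pow_units E e, Fintype.sum_eq_add_sum_subtype_ne _ 0, zero_pow he,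
    zero_add]
  exact (Equiv.sum_comp unitsEquivNeZero fun x : {x : E // x ≠ 0} ↦ (x : E) ^ e).symm

lemma sum_eval_eq_neg_coeff {P : E[X]} (hP : P.natDegree < 2 * (Fintype.card E - 1)) :
    ∑ x, P.eval x = -P.coeff (Fintype.card E - 1) := by
  have := Fintype.one_lt_card (α := E)
  simp_rw [eval_eq_sum_range' hP]
  rw [Finset.sum_comm]
  simp_rw [← Finset.mul_sum]
  rw [Finset.sum_eq_single_of_mem (Fintype.card E - 1) (Finset.mem_range.2 (by omega))]
  · rw [sum_pow_eq_ite_of_ne_zero (by omega), if_pos dvd_rfl, mul_neg_one]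
  intro e he hne
  rcases eq_or_ne e 0 with rfl | he0
  · simp
  rw [sum_pow_eq_ite_of_ne_zero he0, if_neg, mul_zero]
  rintro ⟨t, rfl⟩
  have ht : t < 2 := by
    rw [Finset.mem_range, mul_comm] at he
    exact lt_of_mul_lt_mul_right he (Nat.zero_le _)
  interval_cases t <;> simp at he0 hne

lemma sum_pow_mul_eval_linearizedPolynomial_pow {q r n i e : ℕ} {a : ℕ → E} (hq : 1 < q)
    (hqn : q ^ n < Fintype.card E) (hin : i < n) (hgap : ∀ j, i < j → j < n → a j = 0)
    (he : e + (r * q ^ n + q ^ i) = Fintype.card E - 1) :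
    ∑ x, x ^ e * (linearizedPolynomial q n a).eval x ^ (r + 1) = -((r + 1) * a n ^ r * a i) := by
  set L := linearizedPolynomial q n a
  have hdeg : (L ^ (r + 1) * X ^ e).natDegree < 2 * (Fintype.card E - 1) := by
    have hle : (L ^ (r + 1) * X ^ e).natDegree ≤ (r + 1) * q ^ n + e :=
      natDegree_mul_le_of_le
        (natDegree_pow_le_of_le _ (natDegree_linearizedPolynomial_le hq.pos)) (natDegree_X_pow_le e)
    have hqi : 0 < q ^ i := Nat.pow_pos hq.pos
    lia
  have hcoeff : (L ^ (r + 1) * X ^ e).coeff (Fintype.card E - 1) = (r + 1) * a n ^ r * a i := by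
    rw [← he, add_comm e, coeff_mul_X_pow,
      coeff_pow_succ_of_natDegree_sub_le (Nat.pow_lt_pow_right hq hin)
        (natDegree_linearizedPolynomial_sub_leading_le hq.pos hgap),
      coeff_linearizedPolynomial hq hin.le]
  rw [← hcoeff, ← sum_eval_eq_neg_coeff hdeg]
  exact Finset.sum_congr rfl fun x _ ↦ by simp [mul_comm]

lemma pow_card_div_two_add_one_eq_of_isSquare_div (hE : Odd (Fintype.card E)) {x y : E}
    (hx : x ≠ 0) (hxy : IsSquare (y / x)) :
    y ^ (Fintype.card E / 2 + 1) = x ^ (Fintype.card E / 2) * y := by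
  rcases eq_or_ne y 0 with rfl | hy
  · simp
  have hchar : ringChar E ≠ 2 := fun h ↦
    Nat.not_even_iff_odd.2 hE (Nat.even_iff.2 (FiniteField.even_card_iff_char_two.1 h))
  have hone := (FiniteField.isSquare_iff hchar (div_ne_zero hy hx)).1 hxy
  rw [div_pow, div_eq_one_iff_eq (pow_ne_zero _ hx)] at hone
  rw [pow_succ, hone]

end FiniteField

section SumOfProductOfLinearMaps

variable {K : Type*} [Field K] [Fintype K]

lemma sum_eval_algebraMap_comp_eq_zero {σ A : Type*} [Fintype σ] [DecidableEq σ] [CommRing A]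
    [Algebra K A] {P : MvPolynomial σ A}
    (hP : P.totalDegree < (Fintype.card K - 1) * Fintype.card σ) :
    ∑ x : σ → K, P.eval (algebraMap K A ∘ x) = 0 := by
  simp_rw [MvPolynomial.eval_eq']
  rw [Finset.sum_comm]
  refine Finset.sum_eq_zero fun d hd ↦ ?_
  have hmonomial : ∑ x : σ → K, ∏ i, x i ^ d i = 0 := by
    simpa [MvPolynomial.eval_monomial, Finsupp.prod_fintype] using
      MvPolynomial.sum_eval_eq_zero (MvPolynomial.monomial d (1 : K)) <|
        ((MvPolynomial.totalDegree_monomial_le d _).trans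
          (MvPolynomial.le_totalDegree hd)).trans_lt hP
  simp_rw [← Finset.mul_sum, Function.comp_apply, ← map_pow, ← map_prod, ← map_sum, hmonomial,
    map_zero, mul_zero]

variable {V A : Type*} [AddCommGroup V] [Module K V] [Fintype V] [CommRing A] [Algebra K A]

lemma sum_multiset_prod_linearMap_eq_zero {s : Multiset (V →ₗ[K] A)}
    (hs : s.card < (Fintype.card K - 1) * finrank K V) :
    ∑ v, (s.map fun f ↦ f v).prod = 0 := by
  let b := finBasis K V
  let P (f : V →ₗ[K] A) : MvPolynomial (Fin (finrank K V)) A :=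
    ∑ i, MvPolynomial.monomial (Finsupp.single i 1) (f (b i))
  have hP (f : V →ₗ[K] A) : (P f).totalDegree ≤ 1 :=
    MvPolynomial.totalDegree_finsetSum_le fun i _ ↦
      (MvPolynomial.totalDegree_monomial_le _ _).trans (by simp)
  have hdeg : (s.map P).prod.totalDegree ≤ s.card := by
    refine (MvPolynomial.totalDegree_multiset_prod _).trans ?_
    simpa using Multiset.sum_le_card_nsmul ((s.map P).map MvPolynomial.totalDegree) 1
      (by simpa using fun f _ ↦ hP f)
  have heval (f : V →ₗ[K] A) (v : V) : f v = (P f).eval (algebraMap K A ∘ b.equivFun v) := by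
    conv_lhs => rw [← b.sum_equivFun v, map_sum]
    simp [P, MvPolynomial.eval_monomial, Algebra.smul_def, mul_comm]
  rw [← sum_eval_algebraMap_comp_eq_zero (hdeg.trans_lt (by simpa using hs))]
  refine Fintype.sum_equiv b.equivFun.toEquiv _ _ fun v ↦ ?_
  rw [map_multiset_prod, Multiset.map_map]
  exact congrArg Multiset.prod (Multiset.map_congr rfl fun f _ ↦ heval f v)

lemma sum_pow_mul_pow_linearMap_eq_zero (f g : V →ₗ[K] A) {s t : Multiset ℕ}
    (hst : s.card + t.card < (Fintype.card K - 1) * finrank K V) :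
    ∑ v, f v ^ (s.map (Fintype.card K ^ ·)).sum * g v ^ (t.map (Fintype.card K ^ ·)).sum = 0 := by
  let twist (h : V →ₗ[K] A) (j : ℕ) : V →ₗ[K] A :=
    (FiniteField.frobeniusAlgHom K A ^ j).toLinearMap ∘ₗ h
  have htwist (h : V →ₗ[K] A) (u : Multiset ℕ) (v : V) :
      ((u.map (twist h)).map fun f ↦ f v).prod = h v ^ (u.map (Fintype.card K ^ ·)).sum := by
    induction u using Multiset.induction_on with
    | empty => simp
    | cons j u ih => simp_all [twist, FiniteField.coe_frobeniusAlgHom, pow_iterate, pow_add]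
  have hsum := sum_multiset_prod_linearMap_eq_zero (s := s.map (twist f) + t.map (twist g))
    (by simpa using hst)
  simpa only [Multiset.map_add, Multiset.prod_add, htwist] using hsum

end SumOfProductOfLinearMaps

section Extension

variable {K E : Type*} [Field K] [Fintype K] [Field E] [Algebra K E]

variable (K) in
lemma exists_linearMap_eq_eval_linearizedPolynomial (n : ℕ) (a : ℕ → E) :
    ∃ f : E →ₗ[K] E, ∀ x, f x = (linearizedPolynomial (Fintype.card K) n a).eval x :=
  ⟨∑ i ∈ Finset.range (n + 1), a i • (FiniteField.frobeniusAlgHom K E ^ i).toLinearMap, fun x ↦ by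
    simp [linearizedPolynomial, eval_finsetSum, FiniteField.coe_frobeniusAlgHom, pow_iterate]⟩

variable {r n i : ℕ}

lemma natCast_add_one_ne_zero_of_card_eq (hr : Fintype.card K = 2 * r + 1) :
    (r + 1 : E) ≠ 0 := fun h ↦ by
  have hcard : ((2 * r + 1 : ℕ) : E) = 0 := by
    rw [← hr, ← map_natCast (algebraMap K E), FiniteField.cast_card_eq_zero, map_zero]
  push_cast at hcard
  exact one_ne_zero (by linear_combination 2 * h - hcard : (1 : E) = 0)

lemma sum_map_pow_nsmul_range_finrank [Fintype E] (hr : Fintype.card K = 2 * r + 1) :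
    ((r • Multiset.range (finrank K E)).map (Fintype.card K ^ ·)).sum = Fintype.card E / 2 := by
  have hgeom := geom_sum_mul_add (2 * r) (finrank K E)
  rw [← hr, ← Module.card_eq_pow_finrank (K := K) (V := E)] at hgeom
  rw [Multiset.map_nsmul, Multiset.sum_nsmul, smul_eq_mul]
  change r * ∑ j ∈ Finset.range (finrank K E), Fintype.card K ^ j = _
  lia

lemma exists_complement_digits [Fintype E] (hr : Fintype.card K = 2 * r + 1) {u : Multiset ℕ}
    (hu : u ≤ r • Multiset.range (finrank K E)) :
    ∃ s : Multiset ℕ, s.card + u.card = r * finrank K E ∧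
      (s.map (Fintype.card K ^ ·)).sum + (u.map (Fintype.card K ^ ·)).sum =
        Fintype.card E / 2 := by
  obtain ⟨s, hs⟩ := Multiset.le_iff_exists_add.1 hu
  refine ⟨s, ?_, ?_⟩
  · rw [add_comm, ← Multiset.card_add, ← hs, Multiset.card_nsmul, Multiset.card_range]
  · rw [add_comm, ← Multiset.sum_add, ← Multiset.map_add, ← hs, sum_map_pow_nsmul_range_finrank hr]

lemma nsmul_singleton_add_singleton_le_nsmul_range {k : ℕ} (hr : 0 < r) (hn : n < k) (hi : i < k)
    (hin : i ≠ n) : r • {n} + {i} ≤ r • Multiset.range k := by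
  have hpair : ({n} + {i} : Multiset ℕ) ≤ Multiset.range k :=
    (Multiset.le_iff_subset (by simpa using hin.symm)).2 fun j ↦ by simp; lia
  calc r • {n} + {i}
    _ ≤ r • {n} + r • {i} := by gcongr; exact le_self_nsmul zero_le hr.ne'
    _ = r • ({n} + {i}) := (nsmul_add _ _ _).symm
    _ ≤ r • Multiset.range k := nsmul_le_nsmul_right hpair r

lemma exists_sum_pow_mul_linearMap_pow_eq_zero [Fintype E] (hr : Fintype.card K = 2 * r + 1)
    {f : E →ₗ[K] E}
    (hf : ∀ x, f x ^ (Fintype.card E / 2 + 1) = x ^ (Fintype.card E / 2) * f x)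
    (hi : i < finrank K E) (hn : n < finrank K E) (hin : i ≠ n) :
    ∃ e, e + (r * Fintype.card K ^ n + Fintype.card K ^ i) = Fintype.card E - 1 ∧
      ∑ x, x ^ e * f x ^ (r + 1) = 0 := by
  have hr0 : 0 < r := by have := Fintype.one_lt_card (α := K); omega
  have hE : Odd (Fintype.card E) :=
    Module.card_eq_pow_finrank (K := K) (V := E) ▸ Odd.pow ⟨r, hr⟩
  obtain ⟨s, hscard, hssum⟩ := exists_complement_digits hr
    (nsmul_singleton_add_singleton_le_nsmul_range hr0 hn hi hin)
  obtain ⟨t, htcard, htsum⟩ := exists_complement_digits (E := E) hr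
    (nsmul_le_nsmul_right (Multiset.singleton_le.2 (Multiset.mem_range.2 hi.pos)) r)
  simp only [Multiset.map_add, Multiset.map_nsmul, Multiset.map_singleton, Multiset.sum_add,
    Multiset.sum_nsmul, Multiset.sum_singleton, Multiset.card_add, Multiset.card_nsmul,
    Multiset.card_singleton, smul_eq_mul, mul_one, pow_zero] at hscard hssum htcard htsum
  refine ⟨(s.map (Fintype.card K ^ ·)).sum + Fintype.card E / 2, ?_, ?_⟩
  · have := Nat.two_mul_odd_div_two (Nat.odd_iff.1 hE)
    omega
  have hcarry : ((1 ::ₘ t).map (Fintype.card K ^ ·)).sum = Fintype.card E / 2 + 1 + r := by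
    simp only [Multiset.map_cons, Multiset.sum_cons, pow_one]
    omega
  have hvanish := sum_pow_mul_pow_linearMap_eq_zero LinearMap.id f (s := s) (t := 1 ::ₘ t) (by
    rw [Multiset.card_cons, hr, Nat.add_sub_cancel, mul_assoc]
    omega)
  rw [hcarry] at hvanish
  rw [← hvanish]
  refine Finset.sum_congr rfl fun x _ ↦ ?_
  rw [LinearMap.id_apply, pow_add _ _ r, hf]
  ring

lemma coeff_eq_zero_of_isSquare_eval_linearizedPolynomial_div [Finite E]
    (hK : Odd (Fintype.card K)) (hn : n < finrank K E) {a : ℕ → E} (ha : a n ≠ 0)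
    (hsq : ∀ x ≠ 0, IsSquare ((linearizedPolynomial (Fintype.card K) n a).eval x / x))
    (hin : i < n) (hgap : ∀ j, i < j → j < n → a j = 0) : a i = 0 := by
  have := Fintype.ofFinite E
  have hcard : Fintype.card E = Fintype.card K ^ finrank K E := Module.card_eq_pow_finrank
  have hE : Odd (Fintype.card E) := hcard ▸ hK.pow
  obtain ⟨r, hr⟩ := hK
  obtain ⟨f, hf⟩ := exists_linearMap_eq_eval_linearizedPolynomial K n a
  have hfpow (x : E) : f x ^ (Fintype.card E / 2 + 1) = x ^ (Fintype.card E / 2) * f x := by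
    rcases eq_or_ne x 0 with rfl | hx
    · simp
    · exact pow_card_div_two_add_one_eq_of_isSquare_div hE hx (hf x ▸ hsq x hx)
  obtain ⟨e, he, hsum⟩ :=
    exists_sum_pow_mul_linearMap_pow_eq_zero hr hfpow (hin.trans hn) hn hin.ne
  have hprod : (r + 1) * a n ^ r * a i = 0 := by
    have hq : 1 < Fintype.card K := Fintype.one_lt_card
    have hqn := hcard ▸ Nat.pow_lt_pow_right hq hn
    simp_rw [hf] at hsum
    rwa [sum_pow_mul_eval_linearizedPolynomial_pow hq hqn hin hgap he, neg_eq_zero] at hsum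
  exact (mul_eq_zero.1 hprod).resolve_left
    (mul_ne_zero (natCast_add_one_ne_zero_of_card_eq hr) (pow_ne_zero r ha))

theorem linearized_with_square_values_eq_X_pow_general {F : Type*} [Field F] [Algebra F E]
    [Finite E] (hK : Odd (Fintype.card K)) (hn : n < finrank K E) {a : ℕ → F} (ha : a n ≠ 0)
    {c : E} (hc : c ≠ 0)
    (hsq : ∀ x : E, x ≠ 0 →
      IsSquare (c * (aeval x (linearizedPolynomial (Fintype.card K) n a) / x))) :
    linearizedPolynomial (Fintype.card K) n a = C (a n) * X ^ Fintype.card K ^ n := by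
  refine linearizedPolynomial_eq_monomial fun i ↦ ?_
  induction i using Nat.strong_decreasing_induction with
  | base => exact ⟨n, fun i hi hin ↦ absurd hin hi.not_gt⟩
  | step i ih =>
    intro hin
    have hzero : c * algebraMap F E (a i) = 0 :=
      coeff_eq_zero_of_isSquare_eval_linearizedPolynomial_div hK hn
        (a := fun j ↦ c * algebraMap F E (a j)) (by simp [hc, ha])
        (fun x hx ↦ by
          rw [eval_linearizedPolynomial_mul_algebraMap, mul_div_assoc]
          exact hsq x hx)
        hin fun j hij hjn ↦ by simp [ih j hij hjn]
    simpa [hc] using hzero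

end Extension

/-- Let `q` be an odd prime power, `n ≥ 1`, `k > n`, and let
`L(x) ∈ F_q[x]` be a monic `q`-linearized polynomial of `q`-degree `n`. If for every
nonzero `α ∈ F_{q^k}` the element `L(α)/α` is zero or a square in `F_{q^k}`, then
`L(x) = x^(qⁿ)`; similarly if for every nonzero `α ∈ F_{q^k}` the element `−L(α)/α` is
zero or a square in `F_{q^k}`, then `L(x) = x^(qⁿ)`. -/
theorem linearized_with_square_values_eq_X_pow
    (q n k : ℕ) (Fq : Type) [Field Fq] [Fintype Fq] (hq : Fintype.card Fq = q)
    (hqodd : Odd q) (hn : 1 ≤ n) (hk : n < k)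
    (a : ℕ → Fq) (L : Polynomial Fq)
    (hL : L = ∑ i ∈ Finset.range (n + 1), Polynomial.C (a i) * Polynomial.X ^ q ^ i)
    (hmonic : a n = 1)
    (E : Type) [Field E] [Fintype E] [Algebra Fq E] (hE : Fintype.card E = q ^ k) :
    ((∀ α : E, α ≠ 0 →
        Polynomial.aeval α L / α = 0 ∨ ∃ γ : E, Polynomial.aeval α L / α = γ ^ 2) →
      L = Polynomial.X ^ q ^ n) ∧
    ((∀ α : E, α ≠ 0 →
        -(Polynomial.aeval α L / α) = 0 ∨ ∃ γ : E, -(Polynomial.aeval α L / α) = γ ^ 2) →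
      L = Polynomial.X ^ q ^ n) := by
  subst hq
  obtain rfl : L = linearizedPolynomial (Fintype.card Fq) n a := hL
  have hfinrank : k = finrank Fq E :=
    Nat.pow_right_injective Fintype.one_lt_card (hE.symm.trans Module.card_eq_pow_finrank)
  have isSquare_of {y : E} (hy : y = 0 ∨ ∃ γ, y = γ ^ 2) : IsSquare y :=
    hy.elim (· ▸ IsSquare.zero) (isSquare_iff_exists_sq y).2
  have general {c : E} (hc : c ≠ 0) := linearized_with_square_values_eq_X_pow_general hqodd
    (hfinrank ▸ hk) (a := a) (hmonic ▸ one_ne_zero) hc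
  rw [hmonic, C_1, one_mul] at general
  exact ⟨fun h ↦ general one_ne_zero fun α hα ↦ by simpa using isSquare_of (h α hα),
    fun h ↦ general (neg_ne_zero.2 one_ne_zero) fun α hα ↦ by simpa using isSquare_of (h α hα)⟩
end
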